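/- Let C be a nodal curve with components C_1,…,C_p, smooth marked point σ(0), and fix (i,j,k) with C_i ∩ C_j ≠ ∅. Let Z_{a,b} := −Σ_m α_{a,b,m} C_m be the twisting divisors making the degree-0 Abel–Jacobi limits σ(0)-quasistable, so that O_C(Z_{a,b})|_C ≅ O_C(−Σ_{Z ∈ T_{a,b}} Z)|_C. Then there is a (possibly empty) subcurve Y of C with C_i ⊆ Y and C_j ⊆ Y^c such that O_C(Z_{i,k})|_C ≅ O_C(Z_{j,k} − Y)|_C. -/

import Mathlib

open Finset

/-- A combinatorial model of a nodal curve: `V` is the set of irreducible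
components, `N` the set of nodes, `ends e` the (one or two) components through
the node `e`, `gen v` the geometric genus of the component `v`, and `base` the
component containing the marked smooth point `σ(0)`. -/
structure NodalGraph where
  V : Type
  N : Type
  [fV : Fintype V]
  [dV : DecidableEq V]
  [fN : Fintype N]
  [dN : DecidableEq N]
  ends : N → V × V
  gen : V → ℕ
  base : V

attribute [instance] NodalGraph.fV NodalGraph.dV NodalGraph.fN NodalGraph.dN

namespace NodalGraph

variable (G : NodalGraph)

/-- Two components are adjacent if some node lies on both. -/
def Adj (a b : G.V) : Prop := ∃ e, G.ends e = (a, b) ∨ G.ends e = (b, a)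

/-- The set of terminal points of a subcurve `Z`, i.e. the nodes in `Z ∩ Zᶜ`. -/
def Term (Z : Finset G.V) : Finset G.N :=
  univ.filter (fun e =>
    ((G.ends e).1 ∈ Z ∧ (G.ends e).2 ∉ Z) ∨ ((G.ends e).1 ∉ Z ∧ (G.ends e).2 ∈ Z))

/-- `k_Z`, the number of terminal points of `Z`. -/
def k (Z : Finset G.V) : ℕ := (G.Term Z).card

/-- A (nonempty) subcurve is connected. -/
def ConnSub (Z : Finset G.V) : Prop :=
  Z.Nonempty ∧ ∀ u ∈ Z, ∀ v ∈ Z,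
    Relation.ReflTransGen (fun a b => a ∈ Z ∧ b ∈ Z ∧ G.Adj a b) u v

/-- The whole curve is connected. -/
def Connected : Prop := G.ConnSub univ

/-- A tail: a proper subcurve `Z` with both `Z` and `Zᶜ` connected. -/
def IsTail (Z : Finset G.V) : Prop := Z ≠ univ ∧ G.ConnSub Z ∧ G.ConnSub Zᶜ

/-- A `m`-tail: a tail with `k_Z = m`. -/
def IsKTail (Z : Finset G.V) (m : ℕ) : Prop := G.IsTail Z ∧ G.k Z = m

/-- The node `e` lies on the component `v`. -/
def onComp (e : G.N) (v : G.V) : Prop := (G.ends e).1 = v ∨ (G.ends e).2 = v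

/-- The node `e`, as a point of the curve, lies on the subcurve `Z`. -/
def nodeOn (e : G.N) (Z : Finset G.V) : Prop := (G.ends e).1 ∈ Z ∨ (G.ends e).2 ∈ Z

/-- The subcurve `Z` crosses the node `e`: both branches of `e` lie in `Z`. -/
def crosses (Z : Finset G.V) (e : G.N) : Prop := (G.ends e).1 ∈ Z ∧ (G.ends e).2 ∈ Z

/-- `Z ≺ Z'`: strict inclusion with disjoint terminal points. -/
def prec (Z Z' : Finset G.V) : Prop := Z ⊂ Z' ∧ G.Term Z ∩ G.Term Z' = ∅

/-- The pair `(Z, Z')` is free: disjoint terminal points. -/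
def free (Z Z' : Finset G.V) : Prop := G.Term Z ∩ G.Term Z' = ∅

/-- The pair `(Z, Z')` is perfect. -/
def perfect (Z Z' : Finset G.V) : Prop := Z ⊆ Z' ∨ Z' ⊆ Z ∨ Zᶜ ⊆ Z' ∨ Z' ⊆ Zᶜ

/-- `T¹_γ`: the nested set of 1-tails containing `C_γ` and avoiding `σ(0)`. -/
def T1 (γ : G.V) : Set (Finset G.V) := { Z | G.IsKTail Z 1 ∧ γ ∈ Z ∧ G.base ∉ Z }

/-- The defining condition for the 2-tails entering `T²_{γ,γ'}`. -/
def cond2 (γ γ' : G.V) (Z : Finset G.V) : Prop :=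
  G.IsKTail Z 2 ∧ γ ∈ Z ∧ γ' ∈ Z ∧ G.base ∉ Z

/-- `W 0 ≺ W 1 ≺ ⋯ ≺ W (M-1)` is the nested set `T²_{γ,γ'}` of 2-tails:
each `W t` is minimal among the 2-tails `Z ⊇ C_γ ∪ C_γ'` with `σ(0) ∈ Zᶜ`
and `W (t-1) ≺ Z` (starting from `W_{-1} = ∅`), and the chain is maximal. -/
def IsNested2 (γ γ' : G.V) (M : ℕ) (W : ℕ → Finset G.V) : Prop :=
  (∀ t < M, Minimal (fun Z => G.cond2 γ γ' Z ∧ G.prec (if t = 0 then ∅ else W (t - 1)) Z) (W t)) ∧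
  ¬ ∃ Z, G.cond2 γ γ' Z ∧ G.prec (if M = 0 then ∅ else W (M - 1)) Z

/-- The set underlying a finite chain `W 0, …, W (M-1)`. -/
def chainSet (M : ℕ) (W : ℕ → Finset G.V) : Set (Finset G.V) := { Z | ∃ t < M, W t = Z }

/-- The defining condition for the 3-tails entering `T³_{γ,γ'}`:
3-tails that are moreover free with respect to every member of `T²_{γ,γ'}`. -/
def cond3 (γ γ' : G.V) (T2 : Set (Finset G.V)) (Z : Finset G.V) : Prop :=
  G.IsKTail Z 3 ∧ γ ∈ Z ∧ γ' ∈ Z ∧ G.base ∉ Z ∧ ∀ W ∈ T2, G.free Z W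

/-- `W 0 ≺ ⋯ ≺ W (M-1)` is the nested set `T³_{γ,γ'}` of 3-tails (relative to
the set `T2` of nested 2-tails). -/
def IsNested3 (γ γ' : G.V) (T2 : Set (Finset G.V)) (M : ℕ) (W : ℕ → Finset G.V) : Prop :=
  (∀ t < M, Minimal (fun Z => G.cond3 γ γ' T2 Z ∧ G.prec (if t = 0 then ∅ else W (t - 1)) Z) (W t)) ∧
  ¬ ∃ Z, G.cond3 γ γ' T2 Z ∧ G.prec (if M = 0 then ∅ else W (M - 1)) Z

end NodalGraph

namespace NodalGraph

variable (G : NodalGraph)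

/-- Number of nodes joining the components `m` and `n`. -/
def pairing (m n : G.V) : ℕ :=
  (Finset.univ.filter (fun e => G.ends e = (m, n) ∨ G.ends e = (n, m))).card

/-- Intersection number `C_n · C_m` on the regular total space of a smoothing:
`#(C_n ∩ C_m)` for `n ≠ m`, and `C_m · C_m = −Σ_{n ≠ m} C_n · C_m` (since
`C · C_m = 0`). -/
noncomputable def inter (n m : G.V) : ℤ :=
  if n = m then -(∑ l ∈ Finset.univ.erase m, (G.pairing l m : ℤ)) else (G.pairing n m : ℤ)

/-- The multidegree on `C` of `O_𝒞(Σ_n a_n C_n)|_C`: its degree on `C_m`. -/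
noncomputable def multideg (a : G.V → ℤ) (m : G.V) : ℤ :=
  ∑ n, a n * G.inter n m

open scoped Classical in
/-- The coefficient at `C_v` of the divisor `−Σ_{Z ∈ T_{i,k}} Z`, where
`T_{i,k} = T¹_i ⊔ T¹_k ⊔ T²_{i,k} ⊔ T³_{i,k}` (disjoint union, so tails are
counted with multiplicity). -/
noncomputable def tailCoeff (i k : G.V) (M2 M3 : ℕ) (W2 W3 : ℕ → Finset G.V)
    (v : G.V) : ℤ :=
  -( ((Finset.univ.filter (fun Z : Finset G.V => Z ∈ G.T1 i ∧ v ∈ Z)).card : ℤ)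
    + ((Finset.univ.filter (fun Z : Finset G.V => Z ∈ G.T1 k ∧ v ∈ Z)).card : ℤ)
    + (((Finset.range M2).filter (fun t => v ∈ W2 t)).card : ℤ)
    + (((Finset.range M3).filter (fun t => v ∈ W3 t)).card : ℤ))

end NodalGraph

namespace NodalGraph

variable (G : NodalGraph)

/-- Slope of a function along a node. -/
def sl (f : G.V → ℤ) (e : G.N) : ℤ := f (G.ends e).1 - f (G.ends e).2

/-- Indicator function of a subcurve. -/
def ind (Y : Finset G.V) (v : G.V) : ℤ := if v ∈ Y then 1 else 0

/-- Dirichlet pairing. -/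
def bil (f g : G.V → ℤ) : ℤ := ∑ e, G.sl f e * G.sl g e

/-- `Y` has no terminal point in `F`. -/
def Fr (F : Set G.N) (Y : Finset G.V) : Prop := ∀ e ∈ F, e ∉ G.Term Y

/-- Quasistability relative to the family of subcurves without terminal points in `F`. -/
structure QS (i k : G.V) (F : Set G.N) (f : G.V → ℤ) : Prop where
  hbase : f G.base = 0
  hF : ∀ e ∈ F, G.sl f e = 0
  hP : ∀ Y, G.base ∉ Y → G.Fr F Y →
    0 ≤ (G.k Y : ℤ) + 2 * G.bil f (G.ind Y) - 2 * G.ind Y i - 2 * G.ind Y k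
  hN : ∀ Y : Finset G.V, G.base ∉ Y → G.Fr F Y → Y.Nonempty →
    0 < (G.k Y : ℤ) - 2 * G.bil f (G.ind Y) + 2 * G.ind Y i + 2 * G.ind Y k

variable {G}

lemma mem_Term {Y : Finset G.V} {e : G.N} :
    e ∈ G.Term Y ↔ ¬ ((G.ends e).1 ∈ Y ↔ (G.ends e).2 ∈ Y) := by
  simp only [Term, mem_filter, mem_univ, true_and]; tauto

lemma sl_ind_eq_zero {Y : Finset G.V} {e : G.N} (h : e ∉ G.Term Y) : G.sl (G.ind Y) e = 0 := by
  rw [mem_Term] at h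
  unfold sl ind
  split_ifs <;> simp_all

lemma k_eq (Y : Finset G.V) : (G.k Y : ℤ) = ∑ e, G.sl (G.ind Y) e ^ 2 := by
  unfold k
  rw [Finset.card_eq_sum_ones, Nat.cast_sum, ← Finset.sum_subset (Finset.subset_univ (G.Term Y))]
  · apply Finset.sum_congr rfl
    intro e he
    rw [mem_Term] at he
    unfold sl ind
    split_ifs <;> simp_all
  · intro e _ he
    rw [sl_ind_eq_zero he]; rfl

lemma sl_sub (f g : G.V → ℤ) (e : G.N) : G.sl (fun v => f v - g v) e = G.sl f e - G.sl g e := by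
  unfold sl; ring

lemma bil_sub (f g h : G.V → ℤ) : G.bil (fun v => f v - g v) h = G.bil f h - G.bil g h := by
  unfold bil
  rw [← Finset.sum_sub_distrib]
  exact Finset.sum_congr rfl fun e _ => by rw [sl_sub]; ring

lemma bil_free {U Y : Finset G.V} (h : G.Term U ∩ G.Term Y = ∅) :
    G.bil (G.ind U) (G.ind Y) = 0 := by
  apply Finset.sum_eq_zero
  intro e _
  by_cases hU : e ∈ G.Term U
  · have : e ∉ G.Term Y := fun hY => by
      have : e ∈ G.Term U ∩ G.Term Y := Finset.mem_inter.2 ⟨hU, hY⟩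
      simp_all
    rw [sl_ind_eq_zero this, mul_zero]
  · rw [sl_ind_eq_zero hU, zero_mul]

lemma Term_compl (Y : Finset G.V) : G.Term Yᶜ = G.Term Y := by
  ext e; simp only [mem_Term, Finset.mem_compl]; tauto

lemma bil_compl (f : G.V → ℤ) (Y : Finset G.V) : G.bil f (G.ind Yᶜ) = - G.bil f (G.ind Y) := by
  unfold bil
  rw [← Finset.sum_neg_distrib]
  refine Finset.sum_congr rfl fun e _ => ?_
  have : G.sl (G.ind Yᶜ) e = - G.sl (G.ind Y) e := by
    unfold sl ind; simp only [Finset.mem_compl]; split_ifs <;> simp_all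
  rw [this]; ring

lemma Fr.inter {F : Set G.N} {A B : Finset G.V} (hA : G.Fr F A) (hB : G.Fr F B) :
    G.Fr F (A ∩ B) := by
  intro e he
  have h1 := hA e he
  have h2 := hB e he
  simp only [mem_Term, Finset.mem_inter] at *; tauto

lemma Fr.union {F : Set G.N} {A B : Finset G.V} (hA : G.Fr F A) (hB : G.Fr F B) :
    G.Fr F (A ∪ B) := by
  intro e he
  have h1 := hA e he
  have h2 := hB e he
  simp only [mem_Term, Finset.mem_union] at *; tauto

lemma Fr.sdiff {F : Set G.N} {A B : Finset G.V} (hA : G.Fr F A) (hB : G.Fr F B) :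
    G.Fr F (A \ B) := by
  intro e he
  have h1 := hA e he
  have h2 := hB e he
  simp only [mem_Term, Finset.mem_sdiff] at *; tauto

lemma Fr.filter {F : Set G.N} {f : G.V → ℤ} (h : ∀ e ∈ F, G.sl f e = 0) (p : ℤ → Prop)
    [DecidablePred p] : G.Fr F (univ.filter fun v => p (f v)) := by
  intro e he
  have h1 : f (G.ends e).1 = f (G.ends e).2 := sub_eq_zero.1 (h e he)
  simp [mem_Term, h1]

lemma Fr.mono {F F' : Set G.N} (h : F ⊆ F') {A : Finset G.V} (hA : G.Fr F' A) : G.Fr F A :=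
  fun e he => hA e (h he)

lemma k_submod (A B : Finset G.V) : G.k (A ∩ B) + G.k (A ∪ B) ≤ G.k A + G.k B := by
  zify
  simp only [k_eq]
  rw [← Finset.sum_add_distrib, ← Finset.sum_add_distrib]
  apply Finset.sum_le_sum
  intro e _
  unfold sl ind
  simp only [Finset.mem_inter, Finset.mem_union]
  by_cases h1 : (G.ends e).1 ∈ A <;> by_cases h2 : (G.ends e).1 ∈ B <;>
  by_cases h3 : (G.ends e).2 ∈ A <;> by_cases h4 : (G.ends e).2 ∈ B <;> simp [h1, h2, h3, h4]

lemma Term_nonempty (hc : G.Connected) {Y : Finset G.V} (h0 : Y.Nonempty) (h1 : Y ≠ univ) :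
    (G.Term Y).Nonempty := by
  by_contra hT
  rw [Finset.not_nonempty_iff_eq_empty] at hT
  obtain ⟨u, hu⟩ := h0
  apply h1
  rw [Finset.eq_univ_iff_forall]
  intro v
  have := hc.2 u (mem_univ _) v (mem_univ _)
  induction this with
  | refl => exact hu
  | tail _ hab ih =>
    obtain ⟨_, _, e, he⟩ := hab
    have hn : e ∉ G.Term Y := by simp [hT]
    rw [mem_Term] at hn
    rcases he with he | he <;> rw [he] at hn <;> simp only at hn <;> tauto

lemma k_pos (hc : G.Connected) {Y : Finset G.V} (h0 : Y.Nonempty) (h1 : Y ≠ univ) : 1 ≤ G.k Y :=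
  Finset.card_pos.2 (Term_nonempty hc h0 h1)

/-- A set is connected if it cannot be split. -/
lemma connSub_of {S : Finset G.V} (h0 : S.Nonempty)
    (h : ∀ A ⊆ S, A.Nonempty → A ≠ S → ∃ a ∈ A, ∃ b ∈ S \ A, G.Adj a b) : G.ConnSub S := by
  classical
  refine ⟨h0, fun u hu v hv => ?_⟩
  set A := S.filter fun v =>
    Relation.ReflTransGen (fun a b => a ∈ S ∧ b ∈ S ∧ G.Adj a b) u v with hA
  by_cases hAS : A = S
  · rw [← hAS] at hv
    exact (Finset.mem_filter.1 hv).2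
  · exfalso
    obtain ⟨a, ha, b, hb, hab⟩ := h A (Finset.filter_subset _ _)
      ⟨u, Finset.mem_filter.2 ⟨hu, Relation.ReflTransGen.refl⟩⟩ hAS
    rw [Finset.mem_sdiff] at hb
    rw [Finset.mem_filter] at ha
    exact hb.2 (Finset.mem_filter.2 ⟨hb.1, ha.2.tail ⟨ha.1, hb.1, hab⟩⟩)

lemma connSub_of_small {F : Set G.N} {S : Finset G.V} (c : ℕ) (h0 : S.Nonempty)
    (hF : ∀ Y, G.Fr F Y → Y.Nonempty → Y ≠ univ → c ≤ G.k Y)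
    (hS : G.Fr F S) (hk : G.k S < 2 * c) : G.ConnSub S := by
  apply connSub_of h0
  intro A hA hA0 hAS
  by_contra hno
  push Not at hno
  have hedge : ∀ e, ((G.ends e).1 ∈ A → (G.ends e).2 ∈ S → (G.ends e).2 ∈ A) ∧
      ((G.ends e).2 ∈ A → (G.ends e).1 ∈ S → (G.ends e).1 ∈ A) := by
    intro e
    constructor
    · intro h1 h2
      by_contra h3
      exact hno _ h1 _ (Finset.mem_sdiff.2 ⟨h2, h3⟩) ⟨e, Or.inl rfl⟩
    · intro h1 h2
      by_contra h3
      exact hno _ h1 _ (Finset.mem_sdiff.2 ⟨h2, h3⟩) ⟨e, Or.inr rfl⟩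
  have hsub := fun v => @hA v
  have hfA : G.Fr F A := by
    intro e he
    have h1 := hS e he
    have h2 := hedge e
    have h3 := hsub (G.ends e).1
    have h4 := hsub (G.ends e).2
    rw [mem_Term] at *
    tauto
  have hsum : G.k A + G.k (S \ A) = G.k S := by
    zify
    simp only [k_eq]
    rw [← Finset.sum_add_distrib]
    refine Finset.sum_congr rfl fun e _ => ?_
    have h2 := hedge e
    have h3 := hsub (G.ends e).1
    have h4 := hsub (G.ends e).2
    unfold sl ind
    simp only [Finset.mem_sdiff]
    by_cases g1 : (G.ends e).1 ∈ A <;> by_cases g2 : (G.ends e).1 ∈ S <;>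
    by_cases g3 : (G.ends e).2 ∈ A <;> by_cases g4 : (G.ends e).2 ∈ S <;> simp_all
  have hne : (S \ A).Nonempty := by
    rw [Finset.sdiff_nonempty]
    exact fun h => hAS (Finset.Subset.antisymm hA h)
  have h1 := hF A hfA hA0 (by
    rintro rfl
    exact hAS (Finset.Subset.antisymm hA (Finset.subset_univ _)))
  have h2 := hF (S \ A) (hS.sdiff hfA) hne (by
    intro h
    obtain ⟨a, ha⟩ := hA0
    have : a ∈ S \ A := h ▸ mem_univ a
    exact (Finset.mem_sdiff.1 this).2 ha)
  omega

lemma Fr.compl {F : Set G.N} {A : Finset G.V} (hA : G.Fr F A) : G.Fr F Aᶜ := by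
  intro e he; rw [Term_compl]; exact hA e he

lemma k_compl (Y : Finset G.V) : G.k Yᶜ = G.k Y := by unfold k; rw [Term_compl]

lemma isTail_of_small {F : Set G.N} {S : Finset G.V} (c : ℕ) (h0 : S.Nonempty) (h1 : S ≠ univ)
    (hF : ∀ Y, G.Fr F Y → Y.Nonempty → Y ≠ univ → c ≤ G.k Y)
    (hS : G.Fr F S) (hk : G.k S < 2 * c) : G.IsTail S := by
  refine ⟨h1, connSub_of_small c h0 hF hS hk, connSub_of_small c ?_ hF hS.compl ?_⟩
  · rw [Finset.nonempty_iff_ne_empty]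
    intro h
    exact h1 (by simpa using h)
  · rwa [k_compl]

/-- Bridges. -/
def bridges (G : NodalGraph) : Set G.N := {e | ∃ Z, G.Term Z = {e}}

lemma two_le_k (hc : G.Connected) {F : Set G.N} (hF : G.bridges ⊆ F) :
    ∀ Y, G.Fr F Y → Y.Nonempty → Y ≠ univ → 2 ≤ G.k Y := by
  intro Y hY h0 h1
  have := k_pos hc h0 h1
  by_contra hlt
  have h : G.k Y = 1 := by omega
  obtain ⟨e, he⟩ := Finset.card_eq_one.1 h
  exact hY e (hF ⟨Y, he⟩) (by rw [he]; simp)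

lemma eq_of_closed {S : Finset G.V} (hS : G.ConnSub S) {B : Finset G.V}
    (h : ∀ e, (G.ends e).1 ∈ S → (G.ends e).2 ∈ S → e ∉ G.Term B) :
    S ⊆ B ∨ S ⊆ Bᶜ := by
  obtain ⟨u, hu⟩ := hS.1
  have key : ∀ v ∈ S, (u ∈ B ↔ v ∈ B) := by
    intro v hv
    have := hS.2 u hu v hv
    clear hv
    induction this with
    | refl => exact Iff.rfl
    | tail _ hab ih =>
      obtain ⟨ha, hb, e, he⟩ := hab
      have := h e (by rcases he with he | he <;> rw [he] <;> assumption)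
        (by rcases he with he | he <;> rw [he] <;> assumption)
      rw [mem_Term] at this
      rcases he with he | he <;> rw [he] at this <;> simp only at this <;> tauto
  by_cases huB : u ∈ B
  · left; intro v hv; exact (key v hv).1 huB
  · right; intro v hv; rw [Finset.mem_compl]; exact fun h' => huB ((key v hv).2 h')

lemma fr_bridges_of_tail {Z : Finset G.V} (hZ : G.IsTail Z) (hk : 2 ≤ G.k Z) :
    G.Fr G.bridges Z := by
  rintro e ⟨B, hB⟩ he
  have hin : ∀ S : Finset G.V, (∀ e', (G.ends e').1 ∈ S → (G.ends e').2 ∈ S → e' ∉ G.Term Z) →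
      ∀ e', (G.ends e').1 ∈ S → (G.ends e').2 ∈ S → e' ∉ G.Term B := by
    intro S hS e' h1 h2 h3
    rw [hB, Finset.mem_singleton] at h3
    subst h3
    exact hS e' h1 h2 he
  have c1 := eq_of_closed hZ.2.1 (hin Z (by
    intro e' h1 h2; rw [mem_Term]; tauto))
  have c2 := eq_of_closed hZ.2.2 (hin Zᶜ (by
    intro e' h1 h2; rw [mem_Term]; rw [Finset.mem_compl] at h1 h2; tauto))
  have hkB : G.k B = 1 := by unfold k; rw [hB]; simp
  have heB : e ∈ G.Term B := by rw [hB]; simp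
  rw [mem_Term] at heB
  have : B = Z ∨ B = Zᶜ := by
    rcases c1 with c1 | c1 <;> rcases c2 with c2 | c2
    · exfalso; apply heB
      have : ∀ v, v ∈ B := fun v => by
        by_cases hv : v ∈ Z
        · exact c1 hv
        · exact c2 (Finset.mem_compl.2 hv)
      simp [this]
    · left
      refine Finset.Subset.antisymm (fun v hv => ?_) c1
      by_contra hvZ
      exact Finset.mem_compl.1 (c2 (Finset.mem_compl.2 hvZ)) hv
    · right
      refine Finset.Subset.antisymm (fun v hv => ?_) c2
      rw [Finset.mem_compl]
      exact fun hvZ => Finset.mem_compl.1 (c1 hvZ) hv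
    · exfalso; apply heB
      have : ∀ v, v ∉ B := fun v => by
        by_cases hv : v ∈ Z
        · exact Finset.mem_compl.1 (c1 hv)
        · exact Finset.mem_compl.1 (c2 (Finset.mem_compl.2 hv))
      simp [this]
  rcases this with h | h
  · rw [h] at hkB; omega
  · rw [h, k_compl] at hkB; omega

lemma ind_le_one (Y : Finset G.V) (v : G.V) : G.ind Y v ≤ 1 := by unfold ind; split_ifs <;> simp
lemma ind_nonneg (Y : Finset G.V) (v : G.V) : 0 ≤ G.ind Y v := by unfold ind; split_ifs <;> simp
lemma ind_of_mem {Y : Finset G.V} {v : G.V} (h : v ∈ Y) : G.ind Y v = 1 := by simp [ind, h]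
lemma ind_of_notMem {Y : Finset G.V} {v : G.V} (h : v ∉ Y) : G.ind Y v = 0 := by simp [ind, h]
lemma mem_of_ind_pos {Y : Finset G.V} {v : G.V} (h : 0 < G.ind Y v) : v ∈ Y := by
  by_contra h'; rw [ind_of_notMem h'] at h; omega

lemma ne_univ_of {Y : Finset G.V} {v : G.V} (h : v ∉ Y) : Y ≠ univ := by
  rintro rfl; simp at h

section QSfacts

variable {i k : G.V} {F : Set G.N} {f : G.V → ℤ}

lemma QS.level (h : G.QS i k F f)
    (h2 : ∀ Y, G.Fr F Y → Y.Nonempty → Y ≠ univ → 2 ≤ G.k Y) {s : ℤ} (hs : 1 ≤ s)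
    {v : G.V} (hv : s ≤ f v) :
    s ≤ f i ∧ s ≤ f k ∧ G.k (univ.filter fun v => s ≤ f v) ≤ 3 ∧
    ∀ e, G.sl f e * G.sl (G.ind (univ.filter fun v => s ≤ f v)) e ≤ 1 := by
  set L := univ.filter fun v => s ≤ f v with hL
  have hmem : ∀ v, v ∈ L ↔ s ≤ f v := by intro v; simp [hL]
  have hb : G.base ∉ L := by rw [hmem, h.hbase]; omega
  have hfr : G.Fr F L := Fr.filter h.hF (fun x => s ≤ x)
  have hne : L.Nonempty := ⟨v, (hmem v).2 hv⟩
  have hk := h2 L hfr hne (ne_univ_of hb)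
  have hN := h.hN L hb hfr hne
  have hD : G.bil f (G.ind L) - G.k L =
      ∑ e, (G.sl f e * G.sl (G.ind L) e - G.sl (G.ind L) e ^ 2) := by
    rw [k_eq, bil, Finset.sum_sub_distrib]
  have hpos : ∀ e ∈ univ, 0 ≤ G.sl f e * G.sl (G.ind L) e - G.sl (G.ind L) e ^ 2 := by
    intro e _
    unfold sl ind
    simp only [hmem]
    split_ifs <;> simp <;> omega
  have hDn := Finset.sum_nonneg hpos
  have hi1 := ind_le_one L i
  have hk1 := ind_le_one L k
  have hD0 : ∑ e, (G.sl f e * G.sl (G.ind L) e - G.sl (G.ind L) e ^ 2) = 0 := by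
    zify at hk; omega
  refine ⟨(hmem i).1 (mem_of_ind_pos ?_), (hmem k).1 (mem_of_ind_pos ?_), ?_, ?_⟩
  · zify at hk; omega
  · zify at hk; omega
  · zify at hk ⊢; omega
  · intro e
    have := Finset.single_le_sum hpos (mem_univ e)
    have h3 : G.sl (G.ind L) e ^ 2 ≤ 1 := by
      unfold sl ind; split_ifs <;> simp
    omega

lemma QS.nonneg (h : G.QS i k F f)
    (h2 : ∀ Y, G.Fr F Y → Y.Nonempty → Y ≠ univ → 2 ≤ G.k Y) (v : G.V) : 0 ≤ f v := by
  by_contra hv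
  push Not at hv
  set L := univ.filter fun v => f v < 0 with hL
  have hmem : ∀ v, v ∈ L ↔ f v < 0 := by intro v; simp [hL]
  have hb : G.base ∉ L := by rw [hmem, h.hbase]; omega
  have hfr : G.Fr F L := Fr.filter h.hF (fun x => x < 0)
  have hne : L.Nonempty := ⟨v, (hmem v).2 hv⟩
  have hk := h2 L hfr hne (ne_univ_of hb)
  have hP := h.hP L hb hfr
  have hD : - G.bil f (G.ind L) - G.k L =
      ∑ e, (- (G.sl f e * G.sl (G.ind L) e) - G.sl (G.ind L) e ^ 2) := by
    rw [k_eq, bil, Finset.sum_sub_distrib, Finset.sum_neg_distrib]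
  have hpos : ∀ e ∈ univ, 0 ≤ - (G.sl f e * G.sl (G.ind L) e) - G.sl (G.ind L) e ^ 2 := by
    intro e _
    unfold sl ind
    simp only [hmem]
    split_ifs <;> simp <;> omega
  have hDn := Finset.sum_nonneg hpos
  have hi1 := ind_nonneg L i
  have hk1 := ind_nonneg L k
  zify at hk; omega

lemma QS.le_i (h : G.QS i k F f)
    (h2 : ∀ Y, G.Fr F Y → Y.Nonempty → Y ≠ univ → 2 ≤ G.k Y) (v : G.V) :
    f v ≤ f i ∧ f v ≤ f k := by
  have h0 := h.nonneg h2 v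
  have hi := h.nonneg h2 i
  have hk := h.nonneg h2 k
  by_cases hv : 1 ≤ f v
  · obtain ⟨a, b, _⟩ := h.level h2 hv le_rfl
    exact ⟨a, b⟩
  · omega

lemma QS.slope (h : G.QS i k F f)
    (h2 : ∀ Y, G.Fr F Y → Y.Nonempty → Y ≠ univ → 2 ≤ G.k Y) (e : G.N) :
    -1 ≤ G.sl f e ∧ G.sl f e ≤ 1 := by
  have ha := h.nonneg h2 (G.ends e).1
  have hb := h.nonneg h2 (G.ends e).2
  constructor
  · by_contra hc
    unfold sl at hc
    obtain ⟨_, _, _, h4⟩ := h.level h2 (s := f (G.ends e).2) (by omega) le_rfl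
    have := h4 e
    unfold sl ind at this
    simp only [mem_filter, mem_univ, true_and] at this
    rw [if_neg (by omega), if_pos (by omega)] at this
    omega
  · by_contra hc
    unfold sl at hc
    obtain ⟨_, _, _, h4⟩ := h.level h2 (s := f (G.ends e).1) (by omega) le_rfl
    have := h4 e
    unfold sl ind at this
    simp only [mem_filter, mem_univ, true_and] at this
    rw [if_pos (by omega), if_neg (by omega)] at this
    omega

/-- Admissible sets. -/
def Adm (i k : G.V) (F : Set G.N) (Z : Finset G.V) : Prop :=
  G.Fr F Z ∧ i ∈ Z ∧ k ∈ Z ∧ G.base ∉ Z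

/-- Key step for 3-cuts. -/
lemma QS.step3 (h : G.QS i k F f)
    (h2 : ∀ Y, G.Fr F Y → Y.Nonempty → Y ≠ univ → 2 ≤ G.k Y)
    (h3 : ∀ Z, Adm i k F Z → 3 ≤ G.k Z) {U : Finset G.V} (hU : Adm i k F U) (hkU : G.k U = 3)
    (hmin : ∀ Z, Adm i k F Z → G.k Z = 3 → Z ⊆ U → Z = U) :
    ∀ e ∈ G.Term U, G.sl f e = G.sl (G.ind U) e := by
  obtain ⟨hfU, hiU, hkkU, hbU⟩ := hU
  have hPU := h.hP U hbU hfU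
  rw [ind_of_mem hiU, ind_of_mem hkkU, hkU] at hPU
  have hle := h.le_i h2
  have hnn := h.nonneg h2
  have hsl := h.slope h2
  have hm : 1 ≤ f i := by
    by_contra hm
    have hz : ∀ v, f v = 0 := fun v => le_antisymm ((hle v).1.trans (by omega)) (hnn v)
    have : G.bil f (G.ind U) = 0 := by
      apply Finset.sum_eq_zero; intro e _; unfold sl; simp [hz]
    rw [this] at hPU; norm_num at hPU
  obtain ⟨-, hk', hkL, -⟩ := h.level h2 hm le_rfl
  set L := univ.filter fun v => f i ≤ f v with hL
  have hmem : ∀ v, v ∈ L ↔ f i ≤ f v := by intro v; simp [hL]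
  have hbL : G.base ∉ L := by rw [hmem, h.hbase]; omega
  have hfL : G.Fr F L := Fr.filter h.hF (fun x => f i ≤ x)
  have hiL : i ∈ L := (hmem i).2 le_rfl
  have hkL' : k ∈ L := (hmem k).2 hk'
  have hsub : U ⊆ L := by
    have a1 := h3 (U ∩ L) ⟨hfU.inter hfL, by simp [hiU, hiL], by simp [hkkU, hkL'], by simp [hbU]⟩
    have a2 := h3 (U ∪ L) ⟨hfU.union hfL, by simp [hiU], by simp [hkkU], by simp [hbU, hbL]⟩
    have a3 := k_submod U L
    have := hmin (U ∩ L) ⟨hfU.inter hfL, by simp [hiU, hiL], by simp [hkkU, hkL'], by simp [hbU]⟩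
      (by omega) Finset.inter_subset_left
    exact Finset.inter_eq_left.1 this
  have hUL : L ⊆ U := by
    by_contra hne
    rw [← Finset.sdiff_nonempty] at hne
    have hN := h.hN (L \ U) (by simp [hbL]) (hfL.sdiff hfU) hne
    rw [ind_of_notMem (by simp [hiU]), ind_of_notMem (by simp [hkkU])] at hN
    have key : (G.k (L \ U) : ℤ) - 2 * G.bil f (G.ind (L \ U)) ≤ G.k U - G.k L := by
      rw [k_eq, k_eq, k_eq, bil, Finset.mul_sum, ← Finset.sum_sub_distrib,
        ← Finset.sum_sub_distrib]
      apply Finset.sum_le_sum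
      intro e _
      have l1 := hsl e
      have l2 := hle (G.ends e).1
      have l3 := hle (G.ends e).2
      have l4 := @hsub (G.ends e).1
      have l5 := @hsub (G.ends e).2
      unfold sl at l1
      unfold sl ind
      simp only [Finset.mem_sdiff]
      rw [hmem] at l4 l5
      by_cases g1 : (G.ends e).1 ∈ U <;> by_cases g2 : f i ≤ f (G.ends e).1 <;>
      by_cases g3 : (G.ends e).2 ∈ U <;> by_cases g4 : f i ≤ f (G.ends e).2 <;>
      simp [hmem, g1, g2, g3, g4] <;> first | omega | (exfalso; tauto)
    have := h3 L ⟨hfL, hiL, hkL', hbL⟩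
    zify at this hkU
    omega
  have hEq : ∀ v, v ∈ U ↔ f i ≤ f v := fun v => by
    rw [← hmem]; exact ⟨fun h => hsub h, fun h => hUL h⟩
  intro e he
  rw [mem_Term] at he
  have l1 := hsl e
  unfold sl at l1 ⊢
  unfold ind
  rw [hEq, hEq] at he
  simp only [hEq]
  split_ifs <;> omega

/-- Key step for 2-cuts. -/
lemma QS.step2 (h : G.QS i k F f)
    (h2 : ∀ Y, G.Fr F Y → Y.Nonempty → Y ≠ univ → 2 ≤ G.k Y)
    {U : Finset G.V} (hU : Adm i k F U) (hkU : G.k U = 2)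
    (hmin : ∀ Z, Adm i k F Z → G.k Z = 2 → Z ⊆ U → Z = U) :
    ∀ e ∈ G.Term U, G.sl f e = G.sl (G.ind U) e := by
  obtain ⟨hfU, hiU, hkkU, hbU⟩ := hU
  have hPU := h.hP U hbU hfU
  rw [ind_of_mem hiU, ind_of_mem hkkU, hkU] at hPU
  have hle := h.le_i h2
  have hnn := h.nonneg h2
  have hsl := h.slope h2
  have hends : ∀ e ∈ G.Term U, ∃ u v, u ∈ U ∧ v ∉ U ∧
      (G.ends e = (u, v) ∨ G.ends e = (v, u)) := by
    intro e he
    rw [mem_Term] at he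
    by_cases h1 : (G.ends e).1 ∈ U
    · exact ⟨_, _, h1, by tauto, Or.inl rfl⟩
    · exact ⟨(G.ends e).2, (G.ends e).1, by tauto, h1, Or.inr rfl⟩
  intro e2 he2
  by_contra hbad
  obtain ⟨e1, he1⟩ : ∃ e1, (G.Term U).erase e2 = {e1} := by
    apply Finset.card_eq_one.1
    rw [Finset.card_erase_of_mem he2]
    change G.k U - 1 = 1
    omega
  have hne : e1 ≠ e2 ∧ e1 ∈ G.Term U := by
    have : e1 ∈ (G.Term U).erase e2 := by rw [he1]; simp
    exact Finset.mem_erase.1 this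
  have hother : ∀ e, e ≠ e1 → e ≠ e2 → e ∉ G.Term U := by
    intro e n1 n2 he
    have : e ∈ (G.Term U).erase e2 := Finset.mem_erase.2 ⟨n2, he⟩
    rw [he1, Finset.mem_singleton] at this
    exact n1 this
  have hbil : G.bil f (G.ind U) = G.sl f e1 * G.sl (G.ind U) e1 + G.sl f e2 * G.sl (G.ind U) e2 := by
    unfold bil
    rw [← Finset.sum_pair (f := fun e => G.sl f e * G.sl (G.ind U) e) hne.1]
    symm
    apply Finset.sum_subset (Finset.subset_univ _)
    intro e _ he
    simp only [Finset.mem_insert, Finset.mem_singleton, not_or] at he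
    rw [sl_ind_eq_zero (hother e he.1 he.2), mul_zero]
  have hsum2 : ∀ g : G.N → ℤ, (∀ e, g e ≤ if e = e1 ∨ e = e2 then 1 else 0) → ∑ e, g e ≤ 2 := by
    intro g hg
    refine (Finset.sum_le_sum fun e _ => hg e).trans ?_
    rw [← Finset.sum_filter, Finset.sum_const]
    have : (univ.filter fun e => e = e1 ∨ e = e2) = {e1, e2} := by ext; simp
    rw [this, Finset.card_pair hne.1]; simp
  obtain ⟨u1, v1, hu1, hv1, hE1⟩ := hends e1 hne.2
  obtain ⟨u2, v2, hu2, hv2, hE2⟩ := hends e2 he2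
  have b1 : G.sl f e1 * G.sl (G.ind U) e1 = f u1 - f v1 := by
    unfold sl ind; rcases hE1 with hE | hE <;> simp [hE, hu1, hv1]
  have b2 : G.sl f e2 * G.sl (G.ind U) e2 = f u2 - f v2 := by
    unfold sl ind; rcases hE2 with hE | hE <;> simp [hE, hu2, hv2]
  have c1 : f u1 - f v1 ≤ 1 := by
    have := hsl e1; unfold sl at this
    rcases hE1 with hE | hE <;> simp only [hE] at this <;> omega
  have c2 : f u2 - f v2 ≤ 0 := by
    have := hsl e2; unfold sl at this
    unfold sl ind at hbad
    rcases hE2 with hE | hE <;> simp [hE, hu2, hv2] at this hbad <;> omega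
  rw [hbil, b1, b2] at hPU
  push_cast at hPU
  have d1 : f u1 = f v1 + 1 := by omega
  have d2 : f u2 = f v2 := by omega
  by_cases hcase : f v1 < f v2
  · -- lower the outside
    have hv1n := hnn v1
    set X := univ.filter fun v => v ∉ U ∧ f v2 ≤ f v with hX
    have hmX : ∀ v, v ∈ X ↔ v ∉ U ∧ f v2 ≤ f v := by intro v; simp [hX]
    have hXeq : X = (univ.filter fun v => f v2 ≤ f v) \ U := by
      ext v; simp only [hmX, Finset.mem_sdiff, mem_filter, mem_univ, true_and]; tauto
    have hfX : G.Fr F X := by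
      rw [hXeq]; exact (Fr.filter h.hF (fun x => f v2 ≤ x)).sdiff hfU
    have hbX : G.base ∉ X := by rw [hmX, h.hbase]; omega
    have hN := h.hN X hbX hfX ⟨v2, (hmX _).2 ⟨hv2, le_rfl⟩⟩
    rw [ind_of_notMem (by simp [hmX, hiU]), ind_of_notMem (by simp [hmX, hkkU])] at hN
    have hkXU := h2 (X ∪ U) (hfX.union hfU) ⟨i, by simp [hiU]⟩
      (ne_univ_of (v := G.base) (by simp [hbX, hbU]))
    have key : (G.k X : ℤ) - 2 * G.bil f (G.ind X) + G.k (X ∪ U) ≤ 2 := by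
      rw [k_eq, k_eq, bil, Finset.mul_sum, ← Finset.sum_sub_distrib,
        ← Finset.sum_add_distrib]
      apply hsum2
      intro e
      by_cases q1 : e = e1
      · subst q1
        have q : v1 ∉ X := by rw [hmX]; omega
        have q' : u1 ∉ X := by rw [hmX]; tauto
        unfold sl ind
        rcases hE1 with hE | hE <;> simp [hE, hu1, hv1, q, q']
      by_cases q2 : e = e2
      · subst q2
        have q : v2 ∈ X := by rw [hmX]; exact ⟨hv2, le_rfl⟩
        have q' : u2 ∉ X := by rw [hmX]; tauto
        unfold sl ind
        rcases hE2 with hE | hE <;> simp [hE, hu2, hv2, q, q', d2]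
      have q3 := hother e q1 q2
      rw [mem_Term] at q3
      simp only [q1, q2, or_self, if_false]
      unfold sl ind
      simp only [Finset.mem_union, hmX]
      by_cases g1 : (G.ends e).1 ∈ U
      · have g3 : (G.ends e).2 ∈ U := by tauto
        simp [g1, g3]
      · have g3 : (G.ends e).2 ∉ U := by tauto
        simp only [g1, g3, not_false_eq_true, true_and, or_false]
        split_ifs <;> simp <;> omega
    zify at hkXU
    omega
  · -- raise the inside
    push Not at hcase
    set Y := univ.filter fun v => v ∈ U ∧ f v ≤ f v2 with hY
    have hmY : ∀ v, v ∈ Y ↔ v ∈ U ∧ f v ≤ f v2 := by intro v; simp [hY]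
    have hYeq : Y = (univ.filter fun v => f v ≤ f v2) ∩ U := by
      ext v; simp only [hmY, Finset.mem_inter, mem_filter, mem_univ, true_and]; tauto
    have hfY : G.Fr F Y := by
      rw [hYeq]; exact (Fr.filter h.hF (fun x => x ≤ f v2)).inter hfU
    have hbY : G.base ∉ Y := by rw [hmY]; tauto
    have hP := h.hP Y hbY hfY
    have hiY : i ∉ Y := by rw [hmY]; have := hle u1; omega
    have hkY : k ∉ Y := by rw [hmY]; have := hle u1; omega
    rw [ind_of_notMem hiY, ind_of_notMem hkY] at hP
    have hA : Adm i k F (U \ Y) := ⟨hfU.sdiff hfY, by simp [hiU, hiY], by simp [hkkU, hkY],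
      by simp [hbU]⟩
    have hk2 := h2 (U \ Y) hA.1 ⟨i, hA.2.1⟩ (ne_univ_of hA.2.2.2)
    have hk3 : G.k (U \ Y) ≠ 2 := by
      intro h'
      have h4 := hmin _ hA h' Finset.sdiff_subset
      have h5 : u2 ∈ U \ Y := by rw [h4]; exact hu2
      rw [Finset.mem_sdiff, hmY] at h5
      exact h5.2 ⟨hu2, d2.le⟩
    have key : (G.k Y : ℤ) + 2 * G.bil f (G.ind Y) + G.k (U \ Y) ≤ 2 := by
      rw [k_eq, k_eq, bil, Finset.mul_sum, ← Finset.sum_add_distrib,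
        ← Finset.sum_add_distrib]
      apply hsum2
      intro e
      by_cases q1 : e = e1
      · subst q1
        have q : v1 ∉ Y := by rw [hmY]; tauto
        have q' : u1 ∉ Y := by rw [hmY]; omega
        unfold sl ind
        rcases hE1 with hE | hE <;> simp [hE, hu1, hv1, q, q']
      by_cases q2 : e = e2
      · subst q2
        have q : u2 ∈ Y := by rw [hmY]; exact ⟨hu2, d2.le⟩
        have q' : v2 ∉ Y := by rw [hmY]; tauto
        unfold sl ind
        rcases hE2 with hE | hE <;> simp [hE, hu2, hv2, q, q', d2]
      have q3 := hother e q1 q2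
      rw [mem_Term] at q3
      simp only [q1, q2, or_self, if_false]
      unfold sl ind
      simp only [Finset.mem_sdiff, hmY]
      by_cases g1 : (G.ends e).1 ∈ U
      · have g3 : (G.ends e).2 ∈ U := by tauto
        simp only [g1, g3, true_and]
        split_ifs <;> simp <;> omega
      · have g3 : (G.ends e).2 ∉ U := by tauto
        simp [g1, g3]
    zify at hk2 hk3
    omega

/-- Removing a cut. -/
lemma QS.remove (h : G.QS i k F f) {U : Finset G.V} (hU : Adm i k F U)
    (hs : ∀ e ∈ G.Term U, G.sl f e = G.sl (G.ind U) e) :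
    G.QS i k (F ∪ {e | e ∈ G.Term U}) (fun v => f v - G.ind U v) := by
  obtain ⟨hfU, hiU, hkkU, hbU⟩ := hU
  have hz : ∀ Y, G.Fr (F ∪ {e | e ∈ G.Term U}) Y →
      G.bil (fun v => f v - G.ind U v) (G.ind Y) = G.bil f (G.ind Y) := by
    intro Y hY
    rw [bil_sub, bil_free, sub_zero]
    ext e
    simp only [Finset.mem_inter, Finset.notMem_empty, iff_false, not_and]
    exact fun he => hY e (Or.inr he)
  refine ⟨?_, ?_, ?_, ?_⟩
  · simp [h.hbase, ind_of_notMem hbU]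
  · rintro e (he | he)
    · rw [sl_sub, h.hF e he, sl_ind_eq_zero (hfU e he), sub_zero]
    · rw [sl_sub, hs e he, sub_self]
  · intro Y hb hY
    rw [hz Y hY]
    exact h.hP Y hb (hY.mono Set.subset_union_left)
  · intro Y hb hY hne
    rw [hz Y hY]
    exact h.hN Y hb (hY.mono Set.subset_union_left) hne

/-- The end of the procedure. -/
lemma QS.eq_zero (h : G.QS i k F f)
    (h2 : ∀ Y, G.Fr F Y → Y.Nonempty → Y ≠ univ → 2 ≤ G.k Y)
    (h4 : ∀ Z, Adm i k F Z → 4 ≤ G.k Z) (v : G.V) : f v = 0 := by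
  have hnn := h.nonneg h2 v
  by_contra hv
  have hv1 : 1 ≤ f v := by omega
  obtain ⟨a, b, c, -⟩ := h.level h2 hv1 le_rfl
  have := h4 _ ⟨Fr.filter h.hF (fun x => f v ≤ x), by simpa using a, by simpa using b, by
    simp [h.hbase]; omega⟩
  omega

end QSfacts

section Existence

lemma abs_sum_ge (hc : G.Connected) (n : ℕ) : ∀ f : G.V → ℤ, f G.base = 0 → ∀ v, (n : ℤ) ≤ f v →
    (n : ℤ) ≤ ∑ e, |G.sl f e| := by
  induction n with
  | zero => intro f _ v _; exact_mod_cast Finset.sum_nonneg fun e _ => abs_nonneg _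
  | succ n ih =>
    intro f hb v hv
    push_cast at hv ⊢
    have h1 := ih (fun w => min (f w) n) (by simp [hb]) v (by simp; omega)
    have hY := Term_nonempty hc (Y := univ.filter fun w => (n : ℤ) + 1 ≤ f w)
      ⟨v, by simpa using hv⟩ (ne_univ_of (v := G.base) (by
        rw [mem_filter, hb]; omega))
    obtain ⟨e, he⟩ := hY
    have h2 : ∑ e, |G.sl (fun w => min (f w) n) e| < ∑ e, |G.sl f e| := by
      apply Finset.sum_lt_sum
      · intro e _; unfold sl; dsimp only; grind
      · refine ⟨e, mem_univ _, ?_⟩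
        rw [mem_Term] at he
        simp only [mem_filter, mem_univ, true_and] at he
        unfold sl; dsimp only; grind
    omega

lemma abs_le_sum (hc : G.Connected) (f : G.V → ℤ) (hb : f G.base = 0) (v : G.V) :
    |f v| ≤ ∑ e, |G.sl f e| := by
  rw [abs_le]
  have hn : 0 ≤ ∑ e, |G.sl f e| := Finset.sum_nonneg fun e _ => abs_nonneg _
  constructor
  · by_cases h0 : 0 ≤ f v
    · omega
    · have := abs_sum_ge hc (f v).natAbs (fun w => - f w) (by simp [hb]) v (by omega)
      have h2 : ∑ e, |G.sl (fun w => - f w) e| = ∑ e, |G.sl f e| := by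
        refine Finset.sum_congr rfl fun e _ => ?_
        rw [← abs_neg]; congr 1; unfold sl; ring
      omega
  · by_cases h0 : 0 ≤ f v
    · have := abs_sum_ge hc (f v).natAbs f hb v (by omega)
      omega
    · omega

lemma bil_ind_self (Y : Finset G.V) : G.bil (G.ind Y) (G.ind Y) = G.k Y := by
  rw [k_eq, bil]; exact Finset.sum_congr rfl fun e _ => by ring

lemma bil_add_self (f g : G.V → ℤ) : G.bil (fun v => f v + g v) (fun v => f v + g v) =
    G.bil f f + 2 * G.bil f g + G.bil g g := by
  unfold bil
  rw [Finset.mul_sum, ← Finset.sum_add_distrib, ← Finset.sum_add_distrib]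
  exact Finset.sum_congr rfl fun e _ => by unfold sl; ring

lemma bil_sub_self (f g : G.V → ℤ) : G.bil (fun v => f v - g v) (fun v => f v - g v) =
    G.bil f f - 2 * G.bil f g + G.bil g g := by
  unfold bil
  rw [Finset.mul_sum, ← Finset.sum_sub_distrib, ← Finset.sum_add_distrib]
  exact Finset.sum_congr rfl fun e _ => by unfold sl; ring

/-- The functional whose minimizer is the quasistable twister. -/
def Psi (i k : G.V) (f : G.V → ℤ) : ℤ :=
  ((Fintype.card G.V : ℤ) + 1) * (G.bil f f - 2 * f i - 2 * f k) + ∑ v, f v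

lemma sum_ind (Y : Finset G.V) : ∑ v, G.ind Y v = Y.card := by
  unfold ind; simp

lemma exists_QS (hc : G.Connected) (i k : G.V) : ∃ f, G.QS i k ∅ f := by
  have hbdd : ∃ b : ℤ, ∀ z, (∃ f : G.V → ℤ, f G.base = 0 ∧ Psi i k f = z) → b ≤ z := by
    refine ⟨((Fintype.card G.V : ℤ) + 1) * (∑ e : G.N, (-7)), ?_⟩
    rintro z ⟨f, hb, rfl⟩
    set S := ∑ e, |G.sl f e| with hS
    have hi := abs_le.1 (abs_le_sum hc f hb i)
    have hk := abs_le.1 (abs_le_sum hc f hb k)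
    have hS0 : 0 ≤ S := Finset.sum_nonneg fun e _ => abs_nonneg _
    have hsum : - ((Fintype.card G.V : ℤ) * S) ≤ ∑ v, f v := by
      have : ∑ v : G.V, (-S) ≤ ∑ v, f v :=
        Finset.sum_le_sum fun v _ => (abs_le.1 (abs_le_sum hc f hb v)).1
      simpa using this
    have h5 : (∑ e : G.N, (-7 : ℤ)) ≤ G.bil f f - 5 * S := by
      rw [hS, Finset.mul_sum, bil, ← Finset.sum_sub_distrib]
      apply Finset.sum_le_sum
      intro e _
      have : G.sl f e * G.sl f e = |G.sl f e| * |G.sl f e| := (abs_mul_abs_self _).symm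
      rw [this]
      have h0 := abs_nonneg (G.sl f e)
      generalize |G.sl f e| = x at *
      by_cases hx : x ≤ 2
      · nlinarith
      · nlinarith
    unfold Psi
    have hK : (0 : ℤ) ≤ (Fintype.card G.V : ℤ) := by positivity
    have h6 : (∑ e : G.N, (-7 : ℤ)) + S ≤ G.bil f f - 2 * f i - 2 * f k := by linarith
    have h7 := mul_le_mul_of_nonneg_left h6 (by linarith : (0 : ℤ) ≤ (Fintype.card G.V : ℤ) + 1)
    nlinarith
  obtain ⟨m, ⟨f, hb, hm⟩, hmin⟩ := Int.exists_least_of_bdd hbdd ⟨_, fun _ => 0, rfl, rfl⟩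
  have hcard : ∀ Y : Finset G.V, (Y.card : ℤ) ≤ Fintype.card G.V := fun Y => by
    exact_mod_cast Finset.card_le_univ Y
  refine ⟨f, hb, by simp, ?_, ?_⟩
  · intro Y hY _
    have h1 := hmin _ ⟨fun v => f v + G.ind Y v, by simp [hb, ind_of_notMem hY], rfl⟩
    rw [← hm] at h1
    unfold Psi at h1
    rw [bil_add_self, Finset.sum_add_distrib, sum_ind, bil_ind_self] at h1
    have := hcard Y
    by_contra hlt
    push Not at hlt
    nlinarith
  · intro Y hY _ hne
    have h1 := hmin _ ⟨fun v => f v - G.ind Y v, by simp [hb, ind_of_notMem hY], rfl⟩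
    rw [← hm] at h1
    unfold Psi at h1
    rw [bil_sub_self, Finset.sum_sub_distrib, sum_ind, bil_ind_self] at h1
    have h3 : (0 : ℤ) < Y.card := by exact_mod_cast hne.card_pos
    by_contra hlt
    push Not at hlt
    nlinarith

end Existence

section OneTails

lemma eq_of_Term (hc : G.Connected) {Z Z' : Finset G.V} (h : G.Term Z = G.Term Z')
    (hb : G.base ∉ Z) (hb' : G.base ∉ Z') : Z = Z' := by
  by_contra hne
  have h1 : ((Z \ Z') ∪ (Z' \ Z)).Nonempty := by
    rw [Finset.nonempty_iff_ne_empty]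
    intro h0
    rw [Finset.union_eq_empty, Finset.sdiff_eq_empty_iff_subset,
      Finset.sdiff_eq_empty_iff_subset] at h0
    exact hne (Finset.Subset.antisymm h0.1 h0.2)
  obtain ⟨e, he⟩ := Term_nonempty hc h1 (ne_univ_of (v := G.base) (by simp [hb, hb']))
  have h2 : e ∈ G.Term Z ↔ e ∈ G.Term Z' := by rw [h]
  rw [mem_Term] at he h2
  rw [mem_Term] at h2
  simp only [Finset.mem_union, Finset.mem_sdiff] at he
  tauto

open scoped Classical in
/-- The sum of the 1-tails. -/
noncomputable def t1 (γ : G.V) (v : G.V) : ℤ :=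
  ∑ Z ∈ univ.filter (fun Z : Finset G.V => Z ∈ G.T1 γ), G.ind Z v

open scoped Classical in
lemma sl_t1 (γ : G.V) (e : G.N) : G.sl (t1 γ) e =
    ∑ Z ∈ univ.filter (fun Z : Finset G.V => Z ∈ G.T1 γ), G.sl (G.ind Z) e := by
  unfold sl t1; rw [← Finset.sum_sub_distrib]

lemma T1_bridge {γ : G.V} {Z : Finset G.V} (hZ : Z ∈ G.T1 γ) {e : G.N} (he : e ∈ G.Term Z) :
    G.Term Z = {e} := by
  obtain ⟨e', he'⟩ := Finset.card_eq_one.1 hZ.1.2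
  rw [he'] at he ⊢
  rw [Finset.mem_singleton] at he
  rw [he]

lemma sl_t1_bridge (hc : G.Connected) (γ : G.V) {e : G.N} {Z0 : Finset G.V}
    (hZ0 : G.Term Z0 = {e}) (hb : G.base ∉ Z0) :
    G.sl (t1 γ) e = G.ind Z0 γ * G.sl (G.ind Z0) e := by
  classical
  rw [sl_t1]
  have heq : ∀ Z ∈ G.T1 γ, e ∈ G.Term Z → Z = Z0 := fun Z hZ he =>
    eq_of_Term hc ((T1_bridge hZ he).trans hZ0.symm) hZ.2.2 hb
  by_cases hγ : γ ∈ Z0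
  · have hk0 : G.k Z0 = 1 := by unfold NodalGraph.k; rw [hZ0]; simp
    have hmem : Z0 ∈ G.T1 γ := by
      refine ⟨⟨isTail_of_small (F := ∅) 1 ⟨γ, hγ⟩ (ne_univ_of hb)
        (fun Y _ h0 h1 => k_pos hc h0 h1) (fun e he => by simp at he) (by omega), hk0⟩, hγ, hb⟩
    rw [Finset.sum_eq_single Z0]
    · rw [ind_of_mem hγ, one_mul]
    · intro Z hZ hne
      simp only [mem_filter, mem_univ, true_and] at hZ
      exact sl_ind_eq_zero fun he => hne (heq Z hZ he)
    · intro hn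
      simp [hmem] at hn
  · rw [ind_of_notMem hγ, zero_mul]
    apply Finset.sum_eq_zero
    intro Z hZ
    simp only [mem_filter, mem_univ, true_and] at hZ
    exact sl_ind_eq_zero fun he => hγ (heq Z hZ he ▸ hZ.2.1)

lemma bil_t1 (γ : G.V) {Y : Finset G.V} (hY : G.Fr G.bridges Y) : G.bil (t1 γ) (G.ind Y) = 0 := by
  classical
  apply Finset.sum_eq_zero
  intro e _
  by_cases he : e ∈ G.Term Y
  · rw [sl_t1, Finset.sum_eq_zero, zero_mul]
    intro Z hZ
    simp only [mem_filter, mem_univ, true_and] at hZ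
    exact sl_ind_eq_zero fun he' => hY e ⟨Z, T1_bridge hZ he'⟩ he
  · rw [sl_ind_eq_zero he, mul_zero]

lemma t1_base (γ : G.V) : t1 γ G.base = 0 := by
  classical
  apply Finset.sum_eq_zero
  intro Z hZ
  simp only [mem_filter, mem_univ, true_and] at hZ
  exact ind_of_notMem hZ.2.2

lemma QS.remove1 (hc : G.Connected) {i k : G.V} {f : G.V → ℤ} (h : G.QS i k ∅ f) :
    G.QS i k G.bridges (fun v => (f v - t1 i v) - t1 k v) := by
  have hz : ∀ Y, G.Fr G.bridges Y →
      G.bil (fun v => (f v - t1 i v) - t1 k v) (G.ind Y) = G.bil f (G.ind Y) := by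
    intro Y hY
    rw [bil_sub, bil_sub, bil_t1 i hY, bil_t1 k hY]; ring
  have hE : ∀ Y : Finset G.V, G.Fr ∅ Y := fun Y e he => by simp at he
  refine ⟨?_, ?_, ?_, ?_⟩
  · simp [h.hbase, t1_base]
  · rintro e ⟨Z, hZ⟩
    obtain ⟨Z0, hZ0, hb⟩ : ∃ Z0, G.Term Z0 = {e} ∧ G.base ∉ Z0 := by
      by_cases hb : G.base ∈ Z
      · exact ⟨Zᶜ, by rw [Term_compl, hZ], by simpa using hb⟩
      · exact ⟨Z, hZ, hb⟩
    rw [sl_sub, sl_sub, sl_t1_bridge hc i hZ0 hb, sl_t1_bridge hc k hZ0 hb]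
    have he : e ∈ G.Term Z0 := by rw [hZ0]; simp
    have hne : Z0.Nonempty := by
      rw [Finset.nonempty_iff_ne_empty]
      rintro rfl
      rw [mem_Term] at he
      simp at he
    have hP := h.hP Z0 hb (hE _)
    have hN := h.hN Z0 hb (hE _) hne
    have hk0 : G.k Z0 = 1 := by unfold NodalGraph.k; rw [hZ0]; simp
    have hbil : G.bil f (G.ind Z0) = G.sl f e * G.sl (G.ind Z0) e := by
      unfold bil
      apply Finset.sum_eq_single
      · intro e' _ hne'
        rw [sl_ind_eq_zero (by rw [hZ0]; simpa using hne'), mul_zero]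
      · simp
    rw [hk0, hbil] at hP hN
    have hs : G.sl (G.ind Z0) e = 1 ∨ G.sl (G.ind Z0) e = -1 := by
      rw [mem_Term] at he
      unfold sl ind
      split_ifs <;> simp_all
    rcases hs with hs | hs <;> rw [hs] at hP hN ⊢ <;> push_cast at hP hN <;> omega
  · intro Y hb hY
    rw [hz Y hY]
    exact h.hP Y hb (hE Y)
  · intro Y hb hY hne
    rw [hz Y hY]
    exact h.hN Y hb (hE Y) hne

end OneTails

section Chains

/-- Accumulated forbidden nodes. -/
def FF (F0 : Set G.N) (W : ℕ → Finset G.V) (t : ℕ) : Set G.N :=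
  F0 ∪ {e | ∃ s < t, e ∈ G.Term (W s)}

lemma chain_remove {i k : G.V} {F0 : Set G.N} {c : ℕ} (hc1 : 1 ≤ c)
    {Q : Finset G.V → Prop} (hQ : ∀ Z, Q Z ↔ Adm i k F0 Z ∧ G.k Z = c)
    (hcmin : ∀ Z, Adm i k F0 Z → c ≤ G.k Z)
    (hstep : ∀ F, F0 ⊆ F → ∀ f U, G.QS i k F f → Adm i k F U → G.k U = c →
      (∀ Z, Adm i k F Z → G.k Z = c → Z ⊆ U → Z = U) →
      ∀ e ∈ G.Term U, G.sl f e = G.sl (G.ind U) e)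
    {M : ℕ} {W : ℕ → Finset G.V}
    (hch : ∀ t < M, Minimal (fun Z => Q Z ∧ G.prec (if t = 0 then ∅ else W (t - 1)) Z) (W t))
    (hend : ¬ ∃ Z, Q Z ∧ G.prec (if M = 0 then ∅ else W (M - 1)) Z)
    {f : G.V → ℤ} (hf : G.QS i k F0 f) :
    G.QS i k (FF F0 W M) (fun v => f v - ∑ s ∈ range M, G.ind (W s) v) ∧
    ∀ Z, Adm i k (FF F0 W M) Z → G.k Z ≠ c := by
  have hsubF : ∀ t, F0 ⊆ FF F0 W t := fun t => Set.subset_union_left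
  have hmono : ∀ t < M, ∀ s ≤ t, W s ⊆ W t := by
    intro t
    induction t with
    | zero => intro _ s hs; rw [Nat.le_zero.1 hs]
    | succ n ih =>
      intro ht s hs
      rcases Nat.lt_or_ge s (n + 1) with h | h
      · have h1 := ih (by omega) s (by omega)
        have h2 := (hch (n + 1) ht).1.2.1.1
        simp only [Nat.add_eq_zero_iff, one_ne_zero, and_false, if_false,
          Nat.add_sub_cancel] at h2
        exact h1.trans h2
      · rw [show s = n + 1 by omega]
  have hadm : ∀ t < M, Adm i k (FF F0 W t) (W t) := by
    intro t ht
    obtain ⟨hA, -⟩ := (hQ _).1 (hch t ht).1.1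
    refine ⟨?_, hA.2⟩
    rintro e (he | ⟨s, hs, he⟩)
    · exact hA.1 e he
    · intro he'
      obtain ⟨n, rfl⟩ : ∃ n, t = n + 1 := ⟨t - 1, by omega⟩
      have h2 := (hch (n + 1) ht).1.2
      simp only [Nat.add_eq_zero_iff, one_ne_zero, and_false, if_false,
          Nat.add_sub_cancel] at h2
      have m1 := hmono n (by omega) s (by omega)
      have m2 := h2.1.1
      have : e ∈ G.Term (W n) ∩ G.Term (W (n + 1)) := by
        refine Finset.mem_inter.2 ⟨?_, he'⟩
        have a1 := @m1 (G.ends e).1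
        have a2 := @m1 (G.ends e).2
        have a3 := @m2 (G.ends e).1
        have a4 := @m2 (G.ends e).2
        rw [mem_Term] at he he' ⊢
        tauto
      rw [h2.2] at this
      simp at this
  have hmain : ∀ t ≤ M, ∀ Z, Adm i k (FF F0 W t) Z → G.k Z = c →
      G.prec (if t = 0 then ∅ else W (t - 1)) Z := by
    intro t
    induction t with
    | zero =>
      intro _ Z hZ _
      simp only [if_true]
      refine ⟨Finset.empty_ssubset.2 ⟨i, hZ.2.1⟩, ?_⟩
      have : G.Term ∅ = ∅ := by ext e; simp [mem_Term]
      rw [this, Finset.empty_inter]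
    | succ n ih =>
      intro ht Z hZ hkZ
      simp only [Nat.add_eq_zero_iff, one_ne_zero, and_false, if_false,
          Nat.add_sub_cancel]
      have hmin := hch n (by omega)
      have hW := hadm n (by omega)
      have hkW : G.k (W n) = c := ((hQ _).1 hmin.1.1).2
      have hF1 : FF F0 W n ⊆ FF F0 W (n + 1) := by
        rintro e (he | ⟨s, hs, he⟩)
        · exact Or.inl he
        · exact Or.inr ⟨s, by omega, he⟩
      have hZn : G.Fr (FF F0 W n) Z := hZ.1.mono hF1
      have hI : Adm i k (FF F0 W n) (Z ∩ W n) := ⟨hZn.inter hW.1, by simp [hZ.2.1, hW.2.1],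
        by simp [hZ.2.2.1, hW.2.2.1], by simp [hZ.2.2.2]⟩
      have hU : Adm i k (FF F0 W n) (Z ∪ W n) := ⟨hZn.union hW.1, by simp [hZ.2.1],
        by simp [hZ.2.2.1], by simp [hZ.2.2.2, hW.2.2.2]⟩
      have hI0 : Adm i k F0 (Z ∩ W n) := ⟨hI.1.mono (hsubF n), hI.2⟩
      have k1 := hcmin _ hI0
      have k2 := hcmin _ ⟨hU.1.mono (hsubF n), hU.2⟩
      have k3 := k_submod Z (W n)
      have kI : G.k (Z ∩ W n) = c := by omega
      have hsub := hmin.2 ⟨(hQ _).2 ⟨hI0, kI⟩, ih (by omega) _ hI kI⟩ Finset.inter_subset_right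
      have hdisj : G.Term (W n) ∩ G.Term Z = ∅ := by
        ext e
        simp only [Finset.mem_inter, Finset.notMem_empty, iff_false, not_and]
        exact fun he => hZ.1 e (Or.inr ⟨n, by omega, he⟩)
      refine ⟨Finset.ssubset_iff_subset_ne.2 ⟨fun v hv => (Finset.mem_inter.1 (hsub hv)).1, ?_⟩,
        hdisj⟩
      intro heq
      rw [heq, Finset.inter_self] at hdisj
      unfold NodalGraph.k at hkZ
      rw [hdisj] at hkZ
      simp at hkZ
      omega
  constructor
  · have : ∀ t ≤ M, G.QS i k (FF F0 W t) (fun v => f v - ∑ s ∈ range t, G.ind (W s) v) := by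
      intro t
      induction t with
      | zero =>
        intro _
        have : FF F0 W 0 = F0 := by unfold FF; simp
        rw [this]
        simpa using hf
      | succ n ih =>
        intro ht
        have hmin := hch n (by omega)
        have hW := hadm n (by omega)
        have hq := ih (by omega)
        have hs := hstep _ (hsubF n) _ (W n) hq hW ((hQ _).1 hmin.1.1).2 (by
          intro Z hZ hkZ hsub
          refine Finset.Subset.antisymm hsub (hmin.2 ⟨(hQ _).2 ⟨⟨hZ.1.mono (hsubF n), hZ.2⟩, hkZ⟩,
            hmain n (by omega) Z hZ hkZ⟩ hsub))
        have := hq.remove hW hs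
        have hF : FF F0 W (n + 1) = FF F0 W n ∪ {e | e ∈ G.Term (W n)} := by
          ext e
          simp only [FF, Set.mem_union, Set.mem_ofPred_eq]
          constructor
          · rintro (h | ⟨s, hs, h⟩)
            · exact Or.inl (Or.inl h)
            · rcases Nat.lt_or_ge s n with h' | h'
              · exact Or.inl (Or.inr ⟨s, h', h⟩)
              · rw [show s = n by omega] at h
                exact Or.inr h
          · rintro ((h | ⟨s, hs, h⟩) | h)
            · exact Or.inl h
            · exact Or.inr ⟨s, by omega, h⟩
            · exact Or.inr ⟨n, by omega, h⟩
        rw [hF]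
        convert this using 2
        rw [Finset.sum_range_succ]; ring
    exact this M le_rfl
  · intro Z hZ hkZ
    exact hend ⟨Z, (hQ _).2 ⟨⟨hZ.1.mono (hsubF M), hZ.2⟩, hkZ⟩, hmain M le_rfl Z hZ hkZ⟩

open scoped Classical in
lemma card_T1 (γ v : G.V) :
    ((Finset.univ.filter (fun Z : Finset G.V => Z ∈ G.T1 γ ∧ v ∈ Z)).card : ℤ) = t1 γ v := by
  rw [← Finset.filter_filter, Finset.card_filter]
  unfold t1 ind
  push_cast
  rfl

lemma card_chain (M : ℕ) (W : ℕ → Finset G.V) (v : G.V) :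
    (((Finset.range M).filter (fun t => v ∈ W t)).card : ℤ) = ∑ s ∈ range M, G.ind (W s) v := by
  rw [Finset.card_filter]
  unfold ind
  push_cast
  rfl

/-- The tail divisor is quasistable. -/
theorem tail_QS (hc : G.Connected) {i k : G.V} {M2 M3 : ℕ} {W2 W3 : ℕ → Finset G.V}
    (hW2 : G.IsNested2 i k M2 W2) (hW3 : G.IsNested3 i k (G.chainSet M2 W2) M3 W3) :
    G.QS i k ∅ (fun v => - G.tailCoeff i k M2 M3 W2 W3 v) := by
  obtain ⟨f, hf⟩ := exists_QS hc i k
  have h1 := hf.remove1 hc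
  have hne : ∀ {F : Set G.N} {Z}, Adm i k F Z → Z.Nonempty ∧ Z ≠ univ := fun {F Z} hZ =>
    ⟨⟨i, hZ.2.1⟩, ne_univ_of hZ.2.2.2⟩
  have hb2 := two_le_k hc (F := G.bridges) subset_rfl
  obtain ⟨h2, h2'⟩ := chain_remove (Q := G.cond2 i k) (c := 2) (by norm_num) (by
      intro Z
      constructor
      · rintro ⟨⟨ht, hk⟩, h1, h2, h3⟩
        exact ⟨⟨fr_bridges_of_tail ht hk.ge, h1, h2, h3⟩, hk⟩
      · rintro ⟨hA, hk⟩
        exact ⟨⟨isTail_of_small 2 (hne hA).1 (hne hA).2 hb2 hA.1 (by omega), hk⟩, hA.2⟩)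
    (fun Z hZ => hb2 Z hZ.1 (hne hZ).1 (hne hZ).2)
    (fun F hF g U hg hU hkU hmin => hg.step2 (two_le_k hc hF) hU hkU hmin) hW2.1 hW2.2 h1
  set F2 := FF G.bridges W2 M2 with hF2
  have hbF : G.bridges ⊆ F2 := Set.subset_union_left
  have h3min : ∀ Z, Adm i k F2 Z → 3 ≤ G.k Z := fun Z hZ => by
    have a := two_le_k hc hbF Z hZ.1 (hne hZ).1 (hne hZ).2
    have b := h2' Z hZ
    omega
  obtain ⟨h3, h3'⟩ := chain_remove (Q := G.cond3 i k (G.chainSet M2 W2)) (c := 3)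
    (by norm_num) (by
      intro Z
      constructor
      · rintro ⟨⟨ht, hk⟩, h1, h2, h3, h4⟩
        refine ⟨⟨?_, h1, h2, h3⟩, hk⟩
        rintro e (he | ⟨s, hs, he⟩)
        · exact fr_bridges_of_tail ht (by omega) e he
        · intro he'
          have := h4 (W2 s) ⟨s, hs, rfl⟩
          have h5 : e ∈ G.Term Z ∩ G.Term (W2 s) := Finset.mem_inter.2 ⟨he', he⟩
          rw [this] at h5
          simp at h5
      · rintro ⟨hA, hk⟩
        refine ⟨⟨isTail_of_small 2 (hne hA).1 (hne hA).2 (two_le_k hc hbF) hA.1 (by omega), hk⟩,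
          hA.2.1, hA.2.2.1, hA.2.2.2, ?_⟩
        rintro _ ⟨s, hs, rfl⟩
        ext e
        simp only [Finset.mem_inter, Finset.notMem_empty, iff_false, not_and]
        exact fun he he' => hA.1 e (Or.inr ⟨s, hs, he'⟩) he)
    h3min
    (fun F hF g U hg hU hkU hmin => hg.step3 (two_le_k hc (hbF.trans hF))
      (fun Z hZ => h3min Z ⟨hZ.1.mono hF, hZ.2⟩) hU hkU hmin) hW3.1 hW3.2 h2
  have hbF3 : F2 ⊆ FF F2 W3 M3 := Set.subset_union_left
  have hz := h3.eq_zero (two_le_k hc (hbF.trans hbF3)) (fun Z hZ => by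
    have a := h3min Z ⟨hZ.1.mono hbF3, hZ.2⟩
    have b := h3' Z hZ
    omega)
  have heq : (fun v => - G.tailCoeff i k M2 M3 W2 W3 v) = f := by
    funext v
    have := hz v
    unfold tailCoeff
    rw [card_T1, card_T1, card_chain, card_chain]
    linarith
  rw [heq]
  exact hf

end Chains

section Final

lemma QS_compare (i j k : G.V) {f g : G.V → ℤ} (hf : G.QS i k ∅ f) (hg : G.QS j k ∅ g)
    {Y : Finset G.V} (h0 : Y.Nonempty) (h1 : Y ≠ univ) :
    G.bil (fun v => f v - g v) (G.ind Y) < G.k Y + G.ind Y i - G.ind Y j := by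
  have hE : ∀ Y : Finset G.V, G.Fr ∅ Y := fun Y e he => by simp at he
  rw [bil_sub]
  by_cases hb : G.base ∈ Y
  · have hbc : G.base ∉ Yᶜ := by simpa using hb
    have hne : (Yᶜ).Nonempty := by
      rw [Finset.nonempty_iff_ne_empty]
      intro h
      exact h1 (by simpa using h)
    have a := hg.hN Yᶜ hbc (hE _) hne
    have b := hf.hP Yᶜ hbc (hE _)
    have hi : ∀ v, G.ind Yᶜ v = 1 - G.ind Y v := by
      intro v; unfold ind; simp only [Finset.mem_compl]; split_ifs <;> simp_all
    rw [bil_compl, k_compl, hi, hi] at a b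
    omega
  · have a := hf.hN Y hb (hE _) h0
    have b := hg.hP Y hb (hE _)
    omega

lemma inter_sum (m : G.V) : ∑ n, G.inter n m = 0 := by
  rw [← Finset.add_sum_erase _ _ (mem_univ m)]
  have : ∑ n ∈ univ.erase m, G.inter n m = ∑ l ∈ univ.erase m, (G.pairing l m : ℤ) := by
    refine Finset.sum_congr rfl fun n hn => ?_
    unfold inter
    rw [if_neg (Finset.ne_of_mem_erase hn)]
  rw [this]
  unfold inter
  simp

lemma multideg_sub (a b : G.V → ℤ) (m : G.V) :
    G.multideg (fun v => a v - b v) m = G.multideg a m - G.multideg b m := by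
  unfold multideg
  rw [← Finset.sum_sub_distrib]
  exact Finset.sum_congr rfl fun _ _ => by ring

lemma multideg_const (c : ℤ) (m : G.V) : G.multideg (fun _ => c) m = 0 := by
  unfold multideg
  rw [← Finset.mul_sum, inter_sum, mul_zero]

lemma subcurve_of_QS (i j k : G.V) (hij : i ≠ j) (hmeet : ∃ e, G.onComp e i ∧ G.onComp e j)
    {f g : G.V → ℤ} (hf : G.QS i k ∅ f) (hg : G.QS j k ∅ g) :
    ∃ Y : Finset G.V, (Y = ∅ ∨ (i ∈ Y ∧ j ∉ Y)) ∧
      ∃ c : ℤ, ∀ v, f v - g v = (if v ∈ Y then 1 else 0) + c := by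
  set d : G.V → ℤ := fun v => f v - g v with hd
  obtain ⟨e, hei, hej⟩ := hmeet
  have hE : G.ends e = (i, j) ∨ G.ends e = (j, i) := by
    rcases hei with a | a <;> rcases hej with b | b
    · exact absurd (a.symm.trans b) hij
    · left; exact Prod.ext a b
    · right; exact Prod.ext b a
    · exact absurd (a.symm.trans b) hij
  have key : ∀ s : ℤ, (∃ v, s ≤ d v) → (∃ w, d w < s) → d j < s ∧ s ≤ d i ∧ d i ≤ d j + 1 := by
    rintro s ⟨v, hv⟩ ⟨w, hw⟩
    set L := univ.filter fun v => s ≤ d v with hL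
    have hmem : ∀ v, v ∈ L ↔ s ≤ d v := by intro v; simp [hL]
    have hlt := QS_compare i j k hf hg (Y := L) ⟨v, (hmem v).2 hv⟩
      (ne_univ_of (v := w) (by rw [hmem]; omega))
    change G.bil d (G.ind L) < _ at hlt
    have hD : G.bil d (G.ind L) - G.k L =
        ∑ e, (G.sl d e * G.sl (G.ind L) e - G.sl (G.ind L) e ^ 2) := by
      rw [k_eq, bil, Finset.sum_sub_distrib]
    have hpos : ∀ e ∈ univ, 0 ≤ G.sl d e * G.sl (G.ind L) e - G.sl (G.ind L) e ^ 2 := by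
      intro e _
      unfold sl ind
      simp only [hmem]
      split_ifs <;> simp <;> omega
    have hDn := Finset.sum_nonneg hpos
    have h1 := Finset.single_le_sum hpos (mem_univ e)
    have hi1 := ind_le_one L i
    have hj0 := ind_nonneg L j
    have hi : i ∈ L := mem_of_ind_pos (by omega)
    have hj : j ∉ L := by
      intro hj
      rw [ind_of_mem hj] at hlt
      omega
    have hs : G.sl d e * G.sl (G.ind L) e - G.sl (G.ind L) e ^ 2 = d i - d j - 1 := by
      unfold sl ind
      rcases hE with hE | hE <;> simp [hE, hi, hj]
    rw [ind_of_mem hi, ind_of_notMem hj] at hlt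
    rw [hs] at h1
    rw [hmem] at hi hj
    refine ⟨by omega, hi, by omega⟩
  by_cases hconst : ∀ v, d v = d i
  · exact ⟨∅, Or.inl rfl, d i, fun v => by simpa using hconst v⟩
  · push Not at hconst
    obtain ⟨v0, hv0⟩ := hconst
    have hall : ∀ v, d v ≠ d i → d v = d j ∧ d i = d j + 1 := by
      intro v hv
      rcases lt_or_gt_of_ne hv with h | h
      · have a := key (d i) ⟨i, le_rfl⟩ ⟨v, h⟩
        have b := key (d v + 1) ⟨i, h⟩ ⟨v, by omega⟩
        omega
      · have a := key (d v) ⟨v, le_rfl⟩ ⟨i, h⟩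
        omega
    have h1 := (hall v0 hv0).2
    refine ⟨univ.filter fun v => d v = d i, Or.inr ⟨by simp, ?_⟩, d j, ?_⟩
    · simp only [mem_filter, mem_univ, true_and]; omega
    · intro v
      simp only [mem_filter, mem_univ, true_and]
      change d v = _
      split_ifs with h
      · omega
      · have := hall v h; omega

end Final

end NodalGraph

/-- Lemma 3.5: with `Z_{a,b}` the twisting divisors (given, via
[22, Thm 6.3], by `Z_{a,b} ≡ −Σ_{Z ∈ T_{a,b}} Z` up to multiples of `C`, i.e.
with the same multidegree), there is a possibly empty subcurve `Y` with
`C_i ⊆ Y` and `C_j ⊆ Yᶜ` such that `O_C(Z_{i,k})|_C ≅ O_C(Z_{j,k} − Y)|_C`. -/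
theorem twisters_differ_by_subcurve
    (G : NodalGraph) (hconn : G.Connected) (i j k : G.V)
    (hij : i ≠ j) (hmeet : ∃ e, G.onComp e i ∧ G.onComp e j)
    (M2i M2j M3i M3j : ℕ) (W2i W2j W3i W3j : ℕ → Finset G.V)
    (h2i : G.IsNested2 i k M2i W2i) (h2j : G.IsNested2 j k M2j W2j)
    (h3i : G.IsNested3 i k (G.chainSet M2i W2i) M3i W3i)
    (h3j : G.IsNested3 j k (G.chainSet M2j W2j) M3j W3j)
    (Zik Zjk : G.V → ℤ)
    (hZik : ∀ m, G.multideg Zik m = G.multideg (G.tailCoeff i k M2i M3i W2i W3i) m)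
    (hZjk : ∀ m, G.multideg Zjk m = G.multideg (G.tailCoeff j k M2j M3j W2j W3j) m) :
    ∃ Y : Finset G.V, (Y = ∅ ∨ (i ∈ Y ∧ j ∉ Y)) ∧
      ∀ m, G.multideg Zik m =
        G.multideg (fun v => Zjk v - (if v ∈ Y then 1 else 0)) m := by
  obtain ⟨Y, hY, c, hc⟩ := NodalGraph.subcurve_of_QS i j k hij hmeet
    (NodalGraph.tail_QS hconn h2i h3i) (NodalGraph.tail_QS hconn h2j h3j)
  refine ⟨Y, hY, fun m => ?_⟩
  have h1 : G.tailCoeff i k M2i M3i W2i W3i = fun v =>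
      (fun v => (fun v => G.tailCoeff j k M2j M3j W2j W3j v) v - (if v ∈ Y then 1 else 0)) v
        - (fun _ => c) v := by
    funext v
    have := hc v
    dsimp only at this ⊢
    linarith
  rw [hZik, h1, NodalGraph.multideg_sub, NodalGraph.multideg_const, sub_zero,
    NodalGraph.multideg_sub, NodalGraph.multideg_sub, hZjk]
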